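/- Let p be a polynomial with real coefficients of degree at most 10 satisfying: p(t) = p(−6−t) for all real t; p(−1) = p(−2) = p(−3) = 0; p(0) = 1; p(1) = 10; and p(2) = 58. Then the coefficient of X^10 in p equals 6/10! = 1/604800. -/

import Mathlib

open Polynomial

/-!
The tenth forward difference of a polynomial `p` of degree at most `10` is the constant
`10! * p.coeff 10`. On the nodes `-8, …, 2`, which are symmetric about `-3`, Serre duality pairs the
values of `p` off the centre, and the zeros at `-3, -2, -1` remove the rest, leaving
`2 * (45 * p(0) - 10 * p(1) + p(2)) = 2 * (45 - 100 + 58) = 6`.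
-/

section ForwardDifferences

open Finset
open scoped fwdDiff

theorem fwdDiff_iter_eval_eq_factorial_mul_coeff {R : Type*} [CommRing R] {p : R[X]} {n : ℕ}
    (hp : p.natDegree ≤ n) (x : R) :
    (Δ_[1])^[n] p.eval x = (n.factorial : R) * p.coeff n := by
  rcases hp.eq_or_lt with rfl | hlt
  · simp [p.fwdDiff_iter_degree_eq_factorial, mul_comm]
  · simp [fwdDiff_iter_eq_zero_of_degree_lt hlt, coeff_eq_zero_of_natDegree_lt hlt]

theorem sum_range_two_mul_add_one_of_palindromic {G : Type*} [AddCommMonoid G] {a : ℕ → G} {m : ℕ}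
    (ha : ∀ k ≤ 2 * m, a (2 * m - k) = a k) :
    ∑ k ∈ range (2 * m + 1), a k = a m + 2 • ∑ j ∈ range m, a (m + (j + 1)) := by
  have lower_eq_upper : ∑ j ∈ range m, a j = ∑ j ∈ range m, a (m + (j + 1)) := by
    rw [← sum_range_reflect]
    refine sum_congr rfl fun j hj ↦ ?_
    have hjm : j < m := mem_range.mp hj
    rw [← ha _ (by omega)]
    congr 1
    omega
  rw [two_mul, add_assoc, sum_range_add, sum_range_succ', lower_eq_upper, add_zero]
  abel

theorem fwdDiff_iter_two_mul_of_symmetric {M G : Type*} [AddCommGroup M] [AddCommGroup G]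
    {f : M → G} {c : M} (hf : ∀ x, f (c + x) = f (c - x)) (h : M) (m : ℕ) :
    (Δ_[h])^[2 * m] f (c - m • h) =
      ((-1 : ℤ) ^ m * (2 * m).choose m) • f c +
        2 • ∑ j ∈ range m,
          ((-1 : ℤ) ^ (m + (j + 1)) * (2 * m).choose (m + (j + 1))) • f (c + (j + 1) • h) := by
  have sign {k : ℕ} (hk : k ≤ 2 * m) : (-1 : ℤ) ^ (2 * m - k) = (-1) ^ k :=
    neg_one_pow_congr (by simp [Nat.even_sub hk])
  have reflect {k : ℕ} (hk : k ≤ 2 * m) :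
      f (c - m • h + (2 * m - k) • h) = f (c - m • h + k • h) := by
    convert! (hf (k • h - m • h)).symm using 2
    · rw [sub_nsmul h hk, two_mul, add_nsmul]
      abel
    · abel
  have node (j : ℕ) : c - m • h + (m + j) • h = c + j • h := by
    rw [add_nsmul]
    abel
  have centre : c - m • h + m • h = c := sub_add_cancel c (m • h)
  have expansion : (Δ_[h])^[2 * m] f (c - m • h) =
      ∑ k ∈ range (2 * m + 1), ((-1 : ℤ) ^ k * (2 * m).choose k) • f (c - m • h + k • h) := by
    rw [fwdDiff_iter_eq_sum_shift]
    exact sum_congr rfl fun k hk ↦ by rw [sign (mem_range_succ_iff.mp hk)]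
  rw [expansion, sum_range_two_mul_add_one_of_palindromic fun k hk ↦ by
    rw [sign hk, Nat.choose_symm hk, reflect hk]]
  simp only [centre, node]

end ForwardDifferences

theorem hilbert_poly_leading_coeff_general {R : Type*} [CommRing R]
    (p : R[X]) (hdeg : p.natDegree ≤ 10)
    (hsym : ∀ t : R, p.eval t = p.eval (-6 - t))
    (hm1 : p.eval (-1) = 0) (hm2 : p.eval (-2) = 0) (hm3 : p.eval (-3) = 0)
    (h0 : p.eval 0 = 1) (h1 : p.eval 1 = 10) (h2 : p.eval 2 = 58) :
    (Nat.factorial 10 : R) * p.coeff 10 = 6 := by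
  have symm_about_neg_three (x : R) : p.eval (-3 + x) = p.eval (-3 - x) := by
    rw [hsym (-3 + x)]
    ring_nf
  calc (Nat.factorial 10 : R) * p.coeff 10
      = (fwdDiff 1)^[2 * 5] p.eval (-3 - 5 • 1) :=
        (fwdDiff_iter_eval_eq_factorial_mul_coeff hdeg _).symm
    _ = 2 * (45 * p.eval 0 - 10 * p.eval 1 + p.eval 2) := by
        rw [fwdDiff_iter_two_mul_of_symmetric symm_about_neg_three]
        norm_num [Finset.sum_range_succ, Nat.choose, hm1, hm2, hm3]
        ring
    _ = 6 := by
        rw [h0, h1, h2]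
        norm_num

/-- The Hilbert polynomial computation for `c₁(Ξ)^10` on `M₂`: a real polynomial of
degree at most 10 with the Serre-duality symmetry `p(t) = p(-6-t)`, vanishing at
`-1, -2, -3`, and with `p(0) = 1`, `p(1) = 10`, `p(2) = 58` has leading coefficient
(coefficient of `X^10`) equal to `6/10! = 1/604800`. -/
theorem hilbert_poly_leading_coeff
    (p : Polynomial ℝ) (hdeg : p.natDegree ≤ 10)
    (hsym : ∀ t : ℝ, p.eval t = p.eval (-6 - t))
    (hm1 : p.eval (-1) = 0) (hm2 : p.eval (-2) = 0) (hm3 : p.eval (-3) = 0)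
    (h0 : p.eval 0 = 1) (h1 : p.eval 1 = 10) (h2 : p.eval 2 = 58) :
    p.coeff 10 = 6 / (Nat.factorial 10 : ℝ) := by
  rw [eq_div_iff (by positivity), mul_comm]
  exact hilbert_poly_leading_coeff_general p hdeg hsym hm1 hm2 hm3 h0 h1 h2
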